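/- (Theorem 1, Riccati compatibility relation.) Let u, p be a smooth solution of the incompressible Euler equations and let ω = curl u. On the open set where ω ≠ 0, define α = ω̂·Sω̂, χ = ω̂×Sω̂, α_p = ω̂·Pω̂, χ_p = ω̂×Pω̂. Then at every such point the quaternion Riccati equation [Dα/Dt, Dχ/Dt] + [α,χ] * [α,χ] + [α_p,χ_p] = 0 holds; equivalently, in components, Dα/Dt = |χ|² − α² − α_p and Dχ/Dt = −2αχ − χ_p. -/

import Mathlib

noncomputable section

open scoped BigOperators

/-- Space-time: a point is a pair (t, x) with t ∈ ℝ, x ∈ ℝ³. -/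
abbrev Pt : Type := ℝ × (Fin 3 → ℝ)

/-- Euclidean dot product on ℝ³. -/
def dot3 (a b : Fin 3 → ℝ) : ℝ := a 0 * b 0 + a 1 * b 1 + a 2 * b 2

/-- Cross product on ℝ³. -/
def cross3 (a b : Fin 3 → ℝ) : Fin 3 → ℝ :=
  ![a 1 * b 2 - a 2 * b 1, a 2 * b 0 - a 0 * b 2, a 0 * b 1 - a 1 * b 0]

/-- Euclidean norm on ℝ³. -/
def norm3 (a : Fin 3 → ℝ) : ℝ := Real.sqrt (dot3 a a)

/-- The quaternion `[s, r]` with scalar part `s` and vector part `r`. -/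
def quat (s : ℝ) (r : Fin 3 → ℝ) : Quaternion ℝ := ⟨s, r 0, r 1, r 2⟩

/-- Material derivative `∂ₜ f + (a·∇)f` of a scalar field `f` along the
velocity field `a`, at the point `z`. -/
def mder (a : Pt → Fin 3 → ℝ) (f : Pt → ℝ) (z : Pt) : ℝ :=
  fderiv ℝ f z ((1 : ℝ), a z)

/-- Spatial partial derivative `∂f/∂xᵢ`. -/
def pd (i : Fin 3) (f : Pt → ℝ) (z : Pt) : ℝ :=
  fderiv ℝ f z ((0 : ℝ), Pi.single i 1)

/-- The vorticity `ω = curl u`. -/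
def vort (u : Pt → Fin 3 → ℝ) (z : Pt) : Fin 3 → ℝ :=
  ![pd 1 (fun q => u q 2) z - pd 2 (fun q => u q 1) z,
    pd 2 (fun q => u q 0) z - pd 0 (fun q => u q 2) z,
    pd 0 (fun q => u q 1) z - pd 1 (fun q => u q 0) z]

/-- The unit vorticity `ω̂ = ω/|ω|`. -/
def vortHat (u : Pt → Fin 3 → ℝ) (z : Pt) : Fin 3 → ℝ :=
  (norm3 (vort u z))⁻¹ • vort u z

/-- The strain matrix `S = ½(∇u + (∇u)ᵀ)` applied to a vector `v`. -/
def strainVec (u : Pt → Fin 3 → ℝ) (z : Pt) (v : Fin 3 → ℝ) : Fin 3 → ℝ :=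
  fun i => ∑ j : Fin 3,
    ((pd j (fun q => u q i) z + pd i (fun q => u q j) z) / 2) * v j

/-- The pressure Hessian `P = (∂²p/∂xᵢ∂xⱼ)` applied to a vector `v`. -/
def hessVec (p : Pt → ℝ) (z : Pt) (v : Fin 3 → ℝ) : Fin 3 → ℝ :=
  fun i => ∑ j : Fin 3, pd i (pd j p) z * v j

/-- The stretching rate `α = ω̂·Sω̂`. -/
def alphaF (u : Pt → Fin 3 → ℝ) (z : Pt) : ℝ :=
  dot3 (vortHat u z) (strainVec u z (vortHat u z))

/-- The swing rate `χ = ω̂×Sω̂`. -/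
def chiF (u : Pt → Fin 3 → ℝ) (z : Pt) : Fin 3 → ℝ :=
  cross3 (vortHat u z) (strainVec u z (vortHat u z))

/-- `α_p = ω̂·Pω̂`. -/
def alphaP (u : Pt → Fin 3 → ℝ) (p : Pt → ℝ) (z : Pt) : ℝ :=
  dot3 (vortHat u z) (hessVec p z (vortHat u z))

/-- `χ_p = ω̂×Pω̂`. -/
def chiP (u : Pt → Fin 3 → ℝ) (p : Pt → ℝ) (z : Pt) : Fin 3 → ℝ :=
  cross3 (vortHat u z) (hessVec p z (vortHat u z))

/-! The quaternion `[α, χ]` is the quotient `[0, Sω] / [0, ω]`. Along the flow `Dω = Sω − (div u) ω`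
and `D(Sω) = −Pω − (div u) Sω`, and the quotient rule in a division algebra turns any such pair into
a Riccati equation for the quotient. The two divergence terms cancel, being a rescaling of numerator
and denominator by a common factor. The matrix `∇u` itself evolves by `D(∇u) = −P − (∇u)²`, which is
the Euler equation commuted with a spatial derivative; the vorticity equation is its antisymmetric
part. -/

open Filter Topology
open Matrix hiding zero_apply
open scoped Quaternion

section DivisionRing

variable {𝕜 E D : Type*} [NontriviallyNormedField 𝕜] [NormedAddCommGroup E] [NormedSpace 𝕜 E]
  [NormedDivisionRing D] [NormedAlgebra 𝕜 D] {s w : E → D} {x : E}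

theorem differentiableAt_div_of_ne_zero (hs : DifferentiableAt 𝕜 s x)
    (hw : DifferentiableAt 𝕜 w x) (hx : w x ≠ 0) : DifferentiableAt 𝕜 (fun y => s y / w y) x := by
  simpa only [div_eq_mul_inv] using hs.fun_mul (hw.fun_inv hx)

theorem fderiv_div_apply_of_ne_zero (hs : DifferentiableAt 𝕜 s x) (hw : DifferentiableAt 𝕜 w x)
    (hx : w x ≠ 0) (v : E) :
    fderiv 𝕜 (fun y => s y / w y) x v =
      (fderiv 𝕜 s x v - s x / w x * fderiv 𝕜 w x v) / w x := by
  have inv_deriv : HasFDerivAt (fun y => (w y)⁻¹) _ x :=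
    (hasFDerivAt_inv' hx).comp x hw.hasFDerivAt
  simp only [div_eq_mul_inv, (hs.hasFDerivAt.fun_mul' inv_deriv).fderiv]
  simp [sub_mul, mul_assoc, neg_add_eq_sub]

theorem riccati_fderiv_div (hs : DifferentiableAt 𝕜 s x) (hw : DifferentiableAt 𝕜 w x)
    (hx : w x ≠ 0) {v : E} {h : D} {δ : 𝕜} (hwv : fderiv 𝕜 w x v = s x - δ • w x)
    (hsv : fderiv 𝕜 s x v = -h - δ • s x) :
    fderiv 𝕜 (fun y => s y / w y) x v + s x / w x * (s x / w x) + h / w x = 0 := by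
  have dilation_cancels : s x / w x * (δ • w x) = δ • s x := by
    rw [mul_smul_comm, div_mul_cancel₀ _ hx]
  calc fderiv 𝕜 (fun y => s y / w y) x v + s x / w x * (s x / w x) + h / w x
      = (-h - δ • s x - (s x / w x * s x - δ • s x) + s x / w x * s x + h) / w x := by
        rw [fderiv_div_apply_of_ne_zero hs hw hx, hwv, hsv, mul_sub, dilation_cancels,
          ← mul_div_assoc, ← add_div, ← add_div]
    _ = 0 := by
        rw [div_eq_zero_iff]
        left
        abel

end DivisionRing

section LinearImage

variable {𝕜 E F G ι : Type*} [NontriviallyNormedField 𝕜] [NormedAddCommGroup E] [NormedSpace 𝕜 E]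
  [NormedAddCommGroup F] [NormedSpace 𝕜 F] [NormedAddCommGroup G] [NormedSpace 𝕜 G] {x : E}

theorem fderiv_clm_map_apply (L : F →L[𝕜] G) {g : E → F} (hg : DifferentiableAt 𝕜 g x) (v : E) :
    fderiv 𝕜 (fun y => L (g y)) x v = L (fderiv 𝕜 g x v) :=
  congrArg (· v) (L.hasFDerivAt.comp x hg.hasFDerivAt).fderiv

theorem fderiv_component_apply {g : E → ι → F} (hg : DifferentiableAt 𝕜 g x) (v : E) (i : ι) :
    fderiv 𝕜 (fun y => g y i) x v = fderiv 𝕜 g x v i :=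
  congrArg (· v) (fderiv_apply hg i)

end LinearImage

section Axial

variable {R : Type*} [CommRing R]

/-- The axial vector of a `3 × 3` matrix. It depends only on the antisymmetric part, and the
vorticity is the axial vector of the velocity gradient. -/
def axial : Matrix (Fin 3) (Fin 3) R →ₗ[R] Fin 3 → R where
  toFun A := ![A 2 1 - A 1 2, A 0 2 - A 2 0, A 1 0 - A 0 1]
  map_add' A B := by ext i; fin_cases i <;> exact add_sub_add_comm _ _ _ _
  map_smul' c A := by ext i; fin_cases i <;> exact (mul_sub _ _ _).symm

theorem axial_apply (A : Matrix (Fin 3) (Fin 3) R) :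
    axial A = ![A 2 1 - A 1 2, A 0 2 - A 2 0, A 1 0 - A 0 1] := rfl

theorem axial_eq_zero_of_isSymm {A : Matrix (Fin 3) (Fin 3) R} (hA : A.IsSymm) : axial A = 0 := by
  ext i
  fin_cases i <;> simp [axial_apply, hA.apply]

theorem transpose_mulVec_axial (A : Matrix (Fin 3) (Fin 3) R) :
    Aᵀ *ᵥ axial A = A *ᵥ axial A := by
  ext i
  fin_cases i <;>
    simp only [axial_apply, mulVec, dotProduct, transpose_apply, Fin.sum_univ_three, Fin.zero_eta,
      Fin.mk_one, Fin.reduceFinMk, cons_val] <;>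
    ring

theorem axial_mul_self (A : Matrix (Fin 3) (Fin 3) R) :
    axial (A * A) = A.trace • axial A - A *ᵥ axial A := by
  ext i
  fin_cases i <;>
    simp only [axial_apply, mul_apply, mulVec, dotProduct, trace, diag_apply, Pi.sub_apply,
      Pi.smul_apply, smul_eq_mul, Fin.sum_univ_three, Fin.zero_eta, Fin.mk_one, Fin.reduceFinMk,
      cons_val] <;>
    ring

end Axial

section MulVec

open scoped Matrix.Norms.Elementwise

variable {𝕜 E m n : Type*} [NontriviallyNormedField 𝕜] [CompleteSpace 𝕜] [NormedAddCommGroup E]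
  [NormedSpace 𝕜 E] [Finite m] [Fintype n] {A : E → Matrix m n 𝕜} {b : E → n → 𝕜} {x : E}

theorem differentiableAt_mulVec (hA : DifferentiableAt 𝕜 A x) (hb : DifferentiableAt 𝕜 b x) :
    DifferentiableAt 𝕜 (fun y => A y *ᵥ b y) x := by
  have := Fintype.ofFinite m
  let B : Matrix m n 𝕜 →L[𝕜] (n → 𝕜) →L[𝕜] m → 𝕜 := (mulVecBilin 𝕜 𝕜).toContinuousBilinearMap
  exact (B.hasFDerivAt_of_bilinear hA.hasFDerivAt hb.hasFDerivAt).differentiableAt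

theorem fderiv_mulVec_apply (hA : DifferentiableAt 𝕜 A x) (hb : DifferentiableAt 𝕜 b x) (v : E) :
    fderiv 𝕜 (fun y => A y *ᵥ b y) x v = A x *ᵥ fderiv 𝕜 b x v + fderiv 𝕜 A x v *ᵥ b x := by
  have := Fintype.ofFinite m
  let B : Matrix m n 𝕜 →L[𝕜] (n → 𝕜) →L[𝕜] m → 𝕜 := (mulVecBilin 𝕜 𝕜).toContinuousBilinearMap
  exact congrArg (· v) (B.fderiv_of_bilinear hA hb)

end MulVec

section Quaternion

@[simp] theorem re_quat (a : ℝ) (x : Fin 3 → ℝ) : (quat a x).re = a := rfl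

@[simp] theorem imI_quat (a : ℝ) (x : Fin 3 → ℝ) : (quat a x).imI = x 0 := rfl

@[simp] theorem imJ_quat (a : ℝ) (x : Fin 3 → ℝ) : (quat a x).imJ = x 1 := rfl

@[simp] theorem imK_quat (a : ℝ) (x : Fin 3 → ℝ) : (quat a x).imK = x 2 := rfl

/-- `quat` as a continuous linear equivalence `ℝ × ℝ³ ≃ ℍ`, so that differentiating a
quaternion-valued field amounts to differentiating its scalar and vector parts. -/
def quatEquiv : (ℝ × (Fin 3 → ℝ)) ≃L[ℝ] ℍ[ℝ] :=
  LinearEquiv.toContinuousLinearEquiv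
    { toFun := fun a => quat a.1 a.2
      invFun := fun q => (q.re, ![q.imI, q.imJ, q.imK])
      map_add' := fun a b => by ext <;> simp
      map_smul' := fun c a => by ext <;> simp
      left_inv := fun a => Prod.ext rfl (by ext i; fin_cases i <;> rfl)
      right_inv := fun q => rfl }

/-- The pure quaternion `[0, x]`, linear in the vector `x`. -/
def imQuat : (Fin 3 → ℝ) →L[ℝ] ℍ[ℝ] :=
  quatEquiv.toContinuousLinearMap.comp (.inr ℝ ℝ (Fin 3 → ℝ))

theorem imQuat_apply (x : Fin 3 → ℝ) : imQuat x = quat 0 x := rfl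

theorem quat_add (a b : ℝ) (x y : Fin 3 → ℝ) : quat a x + quat b y = quat (a + b) (x + y) :=
  (quatEquiv.map_add (a, x) (b, y)).symm

theorem quat_eq_zero_iff {a : ℝ} {x : Fin 3 → ℝ} : quat a x = 0 ↔ a = 0 ∧ x = 0 :=
  (quatEquiv.map_eq_zero_iff (x := (a, x))).trans Prod.mk_eq_zero

theorem imQuat_ne_zero {x : Fin 3 → ℝ} (hx : x ≠ 0) : imQuat x ≠ 0 :=
  fun h => hx (quat_eq_zero_iff.1 h).2

theorem quat_mul (a b : ℝ) (x y : Fin 3 → ℝ) :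
    quat a x * quat b y = quat (a * b - dot3 x y) (a • y + b • x + cross3 x y) := by
  ext <;>
    simp only [Quaternion.re_mul, Quaternion.imI_mul, Quaternion.imJ_mul, Quaternion.imK_mul,
      re_quat, imI_quat, imJ_quat, imK_quat, dot3, cross3, Pi.add_apply, Pi.smul_apply, smul_eq_mul,
      cons_val] <;>
    ring

theorem cross3_self (x : Fin 3 → ℝ) : cross3 x x = 0 := by
  ext i
  fin_cases i <;> simp [cross3, mul_comm]

theorem norm3_sq (x : Fin 3 → ℝ) : norm3 x ^ 2 = dot3 x x :=
  Real.sq_sqrt (by simp only [dot3]; nlinarith [sq_nonneg (x 0), sq_nonneg (x 1), sq_nonneg (x 2)])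

theorem imQuat_div_imQuat (a b : Fin 3 → ℝ) :
    imQuat a / imQuat b =
      quat (dot3 ((norm3 b)⁻¹ • b) ((norm3 b)⁻¹ • a))
        (cross3 ((norm3 b)⁻¹ • b) ((norm3 b)⁻¹ • a)) := by
  have normSq_eq : Quaternion.normSq (imQuat b) = norm3 b ^ 2 := by
    rw [norm3_sq, Quaternion.normSq_def', imQuat_apply]
    simp only [quat, dot3]
    ring
  rw [div_eq_mul_inv, Quaternion.inv_def, normSq_eq, imQuat_apply, imQuat_apply]
  ext <;>
    simp only [mul_smul_comm, Quaternion.re_smul, Quaternion.imI_smul, Quaternion.imJ_smul,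
      Quaternion.imK_smul, Quaternion.re_mul, Quaternion.imI_mul, Quaternion.imJ_mul,
      Quaternion.imK_mul, Quaternion.re_star, Quaternion.imI_star, Quaternion.imJ_star,
      Quaternion.imK_star, re_quat, imI_quat, imJ_quat, imK_quat, dot3, cross3, Pi.smul_apply,
      smul_eq_mul, cons_val] <;>
    ring

theorem quat_riccati_iff {a' a b : ℝ} {x' x y : Fin 3 → ℝ} :
    quat a' x' + quat a x * quat a x + quat b y = 0 ↔
      a' = norm3 x ^ 2 - a ^ 2 - b ∧ ∀ i, x' i = -2 * a * x i - y i := by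
  rw [quat_mul, cross3_self, quat_add, quat_add, quat_eq_zero_iff, norm3_sq, funext_iff]
  refine and_congr ⟨fun h => ?_, fun h => ?_⟩ (forall_congr' fun i => ⟨fun h => ?_, fun h => ?_⟩)
  · linarith
  · linarith
  · simp only [Pi.add_apply, Pi.smul_apply, Pi.zero_apply, smul_eq_mul] at h
    linarith
  · simp only [Pi.add_apply, Pi.smul_apply, Pi.zero_apply, smul_eq_mul]
    linarith [h]

variable {E : Type*} [NormedAddCommGroup E] [NormedSpace ℝ E] {f : E → ℝ} {g : E → Fin 3 → ℝ}
  {x : E}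

theorem differentiableAt_quat_iff : DifferentiableAt ℝ (fun y => quat (f y) (g y)) x ↔
    DifferentiableAt ℝ f x ∧ DifferentiableAt ℝ g x :=
  (quatEquiv.comp_differentiableAt_iff (f := fun y => (f y, g y))).trans
    ⟨fun h => ⟨h.fst, h.snd⟩, fun h => h.1.prodMk h.2⟩

theorem fderiv_quat_apply (hf : DifferentiableAt ℝ f x) (hg : DifferentiableAt ℝ g x) (v : E) :
    fderiv ℝ (fun y => quat (f y) (g y)) x v = quat (fderiv ℝ f x v) (fderiv ℝ g x v) := by
  change fderiv ℝ (quatEquiv ∘ fun y => (f y, g y)) x v = _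
  rw [quatEquiv.comp_fderiv, hf.fderiv_prodMk hg]
  rfl

end Quaternion

section Kinematics

open scoped Matrix.Norms.Elementwise

variable {u : Pt → Fin 3 → ℝ} {p f : Pt → ℝ} {z : Pt}

theorem fderiv_zero_prod_eq_sum_pd (f : Pt → ℝ) (z : Pt) (v : Fin 3 → ℝ) :
    fderiv ℝ f z (0, v) = ∑ k, pd k f z * v k := by
  have basis_expansion : ((0 : ℝ), v) = ∑ k, v k • ((0 : ℝ), (Pi.single k 1 : Fin 3 → ℝ)) := by
    simp [Prod.ext_iff, Prod.fst_sum, Prod.snd_sum, ← Pi.single_smul, Finset.univ_sum_single]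
  simp only [basis_expansion, map_sum, map_smul, smul_eq_mul, mul_comm, pd]

theorem differentiableAt_pd (hf : ContDiffAt ℝ 2 f z) (j : Fin 3) :
    DifferentiableAt ℝ (pd j f) z :=
  ((hf.fderiv_right (m := 1) (by norm_num)).differentiableAt one_ne_zero).clm_apply
    (differentiableAt_const _)

theorem mder_pd (hf : ContDiffAt ℝ 2 f z) (hu : DifferentiableAt ℝ u z) (j : Fin 3) :
    mder u (pd j f) z =
      pd j (mder u f) z - ∑ k, pd k f z * pd j (fun q => u q k) z := by
  -- `D` and `∂ⱼ` commute up to the derivative along the Lie bracket of `(1, u)` and `(0, eⱼ)`.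
  have bracket := VectorField.fderiv_apply_lieBracket (V := fun q => ((1 : ℝ), u q))
    (W := fun _ => ((0 : ℝ), Pi.single j 1)) hf (by simp) (by fun_prop) (by fun_prop)
  have flow_deriv : fderiv ℝ (fun q => ((1 : ℝ), u q)) z (0, Pi.single j 1) =
      (0, fun k => pd j (fun q => u q k) z) := by
    rw [DifferentiableAt.fderiv_prodMk (by fun_prop) hu]
    ext k <;> simp [pd, fderiv_component_apply hu]
  simp only [VectorField.lieBracket, fderiv_fun_const, flow_deriv, Pi.zero_apply, zero_apply,
    zero_sub, map_neg] at bracket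
  change _ = mder u (pd j f) z - pd j (mder u f) z at bracket
  rw [fderiv_zero_prod_eq_sum_pd] at bracket
  linarith

theorem pd_comm (hf : ContDiffAt ℝ 2 f z) (i j : Fin 3) : pd i (pd j f) z = pd j (pd i f) z := by
  have bracket := VectorField.fderiv_apply_lieBracket (V := fun _ : Pt => ((0 : ℝ), Pi.single i 1))
    (W := fun _ => ((0 : ℝ), Pi.single j 1)) hf (by simp) (by fun_prop) (by fun_prop)
  simp only [VectorField.lieBracket, fderiv_fun_const, Pi.zero_apply, zero_apply, sub_zero,
    map_zero] at bracket
  exact sub_eq_zero.1 bracket.symm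

/-- The velocity gradient `(∇u)ᵢⱼ = ∂uᵢ/∂xⱼ`. -/
def velocityGradient (u : Pt → Fin 3 → ℝ) (z : Pt) : Matrix (Fin 3) (Fin 3) ℝ :=
  of fun i j => pd j (fun q => u q i) z

/-- The matrix `P` of second spatial derivatives of the pressure. -/
def pressureHessian (p : Pt → ℝ) (z : Pt) : Matrix (Fin 3) (Fin 3) ℝ :=
  of fun i j => pd i (pd j p) z

theorem vort_eq_axial (u : Pt → Fin 3 → ℝ) (z : Pt) :
    vort u z = axial (velocityGradient u z) := rfl

theorem hessVec_eq_mulVec (p : Pt → ℝ) (z : Pt) (v : Fin 3 → ℝ) :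
    hessVec p z v = pressureHessian p z *ᵥ v := rfl

theorem strainVec_eq_mulVec (u : Pt → Fin 3 → ℝ) (z : Pt) (v : Fin 3 → ℝ) :
    strainVec u z v =
      ((2 : ℝ)⁻¹ • (velocityGradient u z + (velocityGradient u z)ᵀ)) *ᵥ v := by
  ext i
  exact Finset.sum_congr rfl fun j _ => congrArg (· * v j) (div_eq_inv_mul _ _)

theorem strainVec_vort (u : Pt → Fin 3 → ℝ) (z : Pt) :
    strainVec u z (vort u z) = velocityGradient u z *ᵥ vort u z := by
  rw [strainVec_eq_mulVec, vort_eq_axial, smul_mulVec, add_mulVec, transpose_mulVec_axial,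
    ← two_smul ℝ, inv_smul_smul₀ two_ne_zero]

theorem isSymm_pressureHessian (hp : ContDiffAt ℝ 2 p z) : (pressureHessian p z).IsSymm :=
  IsSymm.ext fun i j => pd_comm hp j i

theorem differentiableAt_velocityGradient (hu : ContDiffAt ℝ 2 u z) :
    DifferentiableAt ℝ (velocityGradient u) z :=
  differentiableAt_pi.2 fun i => differentiableAt_pi.2 fun j =>
    differentiableAt_pd (contDiffAt_pi.1 hu i) j

theorem fderiv_velocityGradient_apply (hu : ContDiffAt ℝ 2 u z) (hp : ContDiffAt ℝ 2 p z)
    (heuler : ∀ᶠ q in 𝓝 z, ∀ i, mder u (fun r => u r i) q = -pd i p q) :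
    fderiv ℝ (velocityGradient u) z (1, u z) =
      -pressureHessian p z - velocityGradient u z * velocityGradient u z := by
  have hG := differentiableAt_velocityGradient hu
  ext i j
  have pd_acceleration : pd j (mder u fun q => u q i) z = -pressureHessian p z i j := by
    have near : (mder u fun q => u q i) =ᶠ[𝓝 z] fun q => -pd i p q := heuler.mono fun q hq => hq i
    rw [pd, near.fderiv_eq, fderiv_fun_neg]
    exact congrArg Neg.neg (pd_comm hp j i)
  calc fderiv ℝ (velocityGradient u) z (1, u z) i j
      = mder u (pd j fun q => u q i) z :=
        congrArg (· (1, u z))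
          (hasFDerivAt_pi'.1 (hasFDerivAt_pi'.1 hG.hasFDerivAt i) j).fderiv.symm
    _ = -pressureHessian p z i j -
          ∑ k, pd k (fun q => u q i) z * pd j (fun q => u q k) z := by
        rw [mder_pd (contDiffAt_pi.1 hu i) (hu.differentiableAt two_ne_zero), pd_acceleration]

theorem differentiableAt_vort (hu : ContDiffAt ℝ 2 u z) : DifferentiableAt ℝ (vort u) z :=
  (LinearMap.toContinuousLinearMap (axial (R := ℝ))).differentiableAt.comp z
    (differentiableAt_velocityGradient hu)

theorem fderiv_vort_apply (hu : ContDiffAt ℝ 2 u z) (hp : ContDiffAt ℝ 2 p z)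
    (heuler : ∀ᶠ q in 𝓝 z, ∀ i, mder u (fun r => u r i) q = -pd i p q) :
    fderiv ℝ (vort u) z (1, u z) =
      velocityGradient u z *ᵥ vort u z - (velocityGradient u z).trace • vort u z := by
  calc fderiv ℝ (vort u) z (1, u z)
      = axial (fderiv ℝ (velocityGradient u) z (1, u z)) :=
        fderiv_clm_map_apply (LinearMap.toContinuousLinearMap (axial (R := ℝ)))
          (differentiableAt_velocityGradient hu) _
    _ = velocityGradient u z *ᵥ vort u z - (velocityGradient u z).trace • vort u z := by
        rw [fderiv_velocityGradient_apply hu hp heuler, map_sub, map_neg,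
          axial_eq_zero_of_isSymm (isSymm_pressureHessian hp), axial_mul_self, neg_zero, zero_sub,
          neg_sub, vort_eq_axial]

theorem fderiv_velocityGradient_mulVec_vort_apply (hu : ContDiffAt ℝ 2 u z)
    (hp : ContDiffAt ℝ 2 p z)
    (heuler : ∀ᶠ q in 𝓝 z, ∀ i, mder u (fun r => u r i) q = -pd i p q) :
    fderiv ℝ (fun q => velocityGradient u q *ᵥ vort u q) z (1, u z) =
      -hessVec p z (vort u z) -
        (velocityGradient u z).trace • (velocityGradient u z *ᵥ vort u z) := by
  rw [fderiv_mulVec_apply (differentiableAt_velocityGradient hu) (differentiableAt_vort hu),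
    fderiv_vort_apply hu hp heuler, fderiv_velocityGradient_apply hu hp heuler, mulVec_sub,
    mulVec_smul, sub_mulVec, neg_mulVec, mulVec_mulVec, hessVec_eq_mulVec]
  abel

theorem quat_alphaF_chiF (u : Pt → Fin 3 → ℝ) (z : Pt) :
    quat (alphaF u z) (chiF u z) =
      imQuat (velocityGradient u z *ᵥ vort u z) / imQuat (vort u z) := by
  rw [imQuat_div_imQuat, ← strainVec_vort, alphaF, chiF, vortHat, strainVec_eq_mulVec,
    strainVec_eq_mulVec, mulVec_smul]

theorem quat_alphaP_chiP (u : Pt → Fin 3 → ℝ) (p : Pt → ℝ) (z : Pt) :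
    quat (alphaP u p z) (chiP u p z) =
      imQuat (hessVec p z (vort u z)) / imQuat (vort u z) := by
  rw [imQuat_div_imQuat, alphaP, chiP, vortHat, hessVec_eq_mulVec, hessVec_eq_mulVec, mulVec_smul]

theorem fderiv_quat_flow_apply {g : Pt → Fin 3 → ℝ}
    (h : DifferentiableAt ℝ (fun q => quat (f q) (g q)) z) :
    fderiv ℝ (fun q => quat (f q) (g q)) z (1, u z) =
      quat (mder u f z) (fun i => mder u (fun q => g q i) z) := by
  obtain ⟨hf, hg⟩ := differentiableAt_quat_iff.1 h
  rw [fderiv_quat_apply hf hg]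
  exact congrArg (quat _) (funext fun i => (fderiv_component_apply hg _ i).symm)

theorem riccati_compatibility_general (u : Pt → Fin 3 → ℝ) (p : Pt → ℝ) (z : Pt)
    (hu : ContDiffAt ℝ 2 u z) (hp : ContDiffAt ℝ 2 p z)
    (heuler : ∀ᶠ q in 𝓝 z, ∀ i, mder u (fun r => u r i) q = -pd i p q)
    (hω : vort u z ≠ 0) :
    (quat (mder u (alphaF u) z) (fun i => mder u (fun q => chiF u q i) z) +
      quat (alphaF u z) (chiF u z) * quat (alphaF u z) (chiF u z) +
      quat (alphaP u p z) (chiP u p z) = 0) ∧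
    (mder u (alphaF u) z =
      norm3 (chiF u z) ^ 2 - alphaF u z ^ 2 - alphaP u p z) ∧
    (∀ i, mder u (fun q => chiF u q i) z =
      -2 * alphaF u z * chiF u z i - chiP u p z i) := by
  have vort_diff := differentiableAt_vort hu
  have stretch_diff := differentiableAt_mulVec (differentiableAt_velocityGradient hu) vort_diff
  have denom_diff : DifferentiableAt ℝ (fun q => imQuat (vort u q)) z := by fun_prop
  have num_diff : DifferentiableAt ℝ (fun q => imQuat (velocityGradient u q *ᵥ vort u q)) z := by
    fun_prop
  have quotient_diff : DifferentiableAt ℝ (fun q => quat (alphaF u q) (chiF u q)) z := by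
    simp only [quat_alphaF_chiF]
    exact differentiableAt_div_of_ne_zero num_diff denom_diff (imQuat_ne_zero hω)
  have riccati : fderiv ℝ (fun q => quat (alphaF u q) (chiF u q)) z (1, u z) +
      quat (alphaF u z) (chiF u z) * quat (alphaF u z) (chiF u z) +
      quat (alphaP u p z) (chiP u p z) = 0 := by
    simp only [quat_alphaF_chiF, quat_alphaP_chiP]
    refine riccati_fderiv_div (δ := (velocityGradient u z).trace) num_diff denom_diff
      (imQuat_ne_zero hω) ?_ ?_
    · rw [fderiv_clm_map_apply imQuat vort_diff, fderiv_vort_apply hu hp heuler, map_sub, map_smul]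
    · rw [fderiv_clm_map_apply imQuat stretch_diff,
        fderiv_velocityGradient_mulVec_vort_apply hu hp heuler, map_sub, map_smul, map_neg]
  rw [fderiv_quat_flow_apply quotient_diff] at riccati
  exact ⟨riccati, quat_riccati_iff.1 riccati⟩

end Kinematics

/-- Theorem 1, Riccati compatibility relation: for a smooth
Euler solution, at every point where `ω ≠ 0`,
`[Dα/Dt, Dχ/Dt] + [α,χ]*[α,χ] + [α_p,χ_p] = 0`; in components,
`Dα/Dt = |χ|² − α² − α_p` and `Dχ/Dt = −2αχ − χ_p`. -/
theorem riccati_compatibility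
    (u : Pt → Fin 3 → ℝ) (p : Pt → ℝ)
    (hu : ContDiff ℝ (⊤ : ℕ∞) u) (hp : ContDiff ℝ (⊤ : ℕ∞) p)
    (heuler : ∀ z i, mder u (fun q => u q i) z = - pd i p z)
    (hdiv : ∀ z, ∑ i : Fin 3, pd i (fun q => u q i) z = 0)
    (z : Pt) (hω : vort u z ≠ 0) :
    (quat (mder u (alphaF u) z) (fun i => mder u (fun q => chiF u q i) z) +
      quat (alphaF u z) (chiF u z) * quat (alphaF u z) (chiF u z) +
      quat (alphaP u p z) (chiP u p z) = 0) ∧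
    (mder u (alphaF u) z =
      norm3 (chiF u z) ^ 2 - alphaF u z ^ 2 - alphaP u p z) ∧
    (∀ i, mder u (fun q => chiF u q i) z =
      -2 * alphaF u z * chiF u z i - chiP u p z i) :=
  riccati_compatibility_general u p z (hu.contDiffAt.of_le (WithTop.coe_le_coe.2 le_top))
    (hp.contDiffAt.of_le (WithTop.coe_le_coe.2 le_top)) (.of_forall heuler) hω
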